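/- (Corollary 2, part 1: missingness-adjusted outcome regression.) Fix d = (d1,d2) in {(1,1),(0,1),(1,0)} and d' = (0,0), with P(D = d) > 0. Suppose Assumption DID holds for d and for d', Assumption MAR holds, P(D = d | X) > 0 and P(D = d' | X) > 0 a.s., and all displayed expectations are finite. Then E[(S/q_{d2}(X)) · 1{D = d}]^{-1} · E[(S/q_{d2}(X)) · 1{D = d} · (ΔY − m_{d'}(X))] = τ_{dd'}. -/

import Mathlib

open MeasureTheory Set
open scoped Classical

noncomputable section

namespace DIDMissing

variable {Ω : Type*} {𝓧 : Type*}

/-- Real-valued indicator of a set. -/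
def ind (A : Set Ω) : Ω → ℝ := A.indicator fun _ => (1 : ℝ)

/-- All treatment paths `{0,1}²` (coded as reals). -/
def allPaths : Set (ℝ × ℝ) := {(0, 0), (0, 1), (1, 0), (1, 1)}

/-- The three treated paths `{(1,1), (0,1), (1,0)}`. -/
def threePaths : Set (ℝ × ℝ) := {(1, 1), (0, 1), (1, 0)}

/-- The event `{D = d}` for a treatment path `d = (d₁, d₂)`. -/
def evD (D1 D2 : Ω → ℝ) (d : ℝ × ℝ) : Set Ω := {ω | D1 ω = d.1 ∧ D2 ω = d.2}

/-- The event `{D₂ = b}`. -/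
def evD2 (D2 : Ω → ℝ) (b : ℝ) : Set Ω := {ω | D2 ω = b}

/-- `g` is a (measurable-in-the-covariate) version of the conditional mean `E[Z ∣ A, X]`:
for every bounded measurable `h`, `E[1_A · Z · h(X)] = E[1_A · g(X) · h(X)]`. -/
def IsCondMeanGiven [MeasurableSpace Ω] [MeasurableSpace 𝓧] (P : Measure Ω) (X : Ω → 𝓧)
    (A : Set Ω) (Z : Ω → ℝ) (g : 𝓧 → ℝ) : Prop :=
  Measurable g ∧
    ∀ h : 𝓧 → ℝ, Measurable h → (∃ C, ∀ x, |h x| ≤ C) →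
      ∫ ω, ind A ω * Z ω * h (X ω) ∂P = ∫ ω, ind A ω * g (X ω) * h (X ω) ∂P

/-- Assumption DID for a path `d` relative to `d' = (0,0)`:
(i) no anticipation, `E[Y₀(d) ∣ D = d, X] = E[Y₀(0,0) ∣ D = d, X]` a.s., stated in the
version-free integral form; and (ii) conditional parallel trends, stated as the existence
of a common version of `E[Y₂(0,0) − Y₀(0,0) ∣ X]` and `E[Y₂(0,0) − Y₀(0,0) ∣ D = d, X]`. -/
def DID [MeasurableSpace Ω] [MeasurableSpace 𝓧] (P : Measure Ω) (X : Ω → 𝓧)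
    (D1 D2 : Ω → ℝ) (Y0p Y2p : ℝ × ℝ → Ω → ℝ) (d : ℝ × ℝ) : Prop :=
  (∀ h : 𝓧 → ℝ, Measurable h → (∃ C, ∀ x, |h x| ≤ C) →
      ∫ ω, ind (evD D1 D2 d) ω * Y0p d ω * h (X ω) ∂P
        = ∫ ω, ind (evD D1 D2 d) ω * Y0p (0, 0) ω * h (X ω) ∂P) ∧
  (∃ tr : 𝓧 → ℝ,
      IsCondMeanGiven P X Set.univ (fun ω => Y2p (0, 0) ω - Y0p (0, 0) ω) tr ∧
      IsCondMeanGiven P X (evD D1 D2 d) (fun ω => Y2p (0, 0) ω - Y0p (0, 0) ω) tr)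

/-- Assumption MAR: `S ⟂ (D₁, ΔY) ∣ (D₂, X)`, where `q d₂` is a version of the
missing-data probability `P(S = 1 ∣ D₂ = d₂, X)`, which is `(0,1]`-valued a.s. -/
def MAR [MeasurableSpace Ω] [MeasurableSpace 𝓧] (P : Measure Ω) (X : Ω → 𝓧)
    (D1 D2 S Y0 Y2 : Ω → ℝ) (q : ℝ → 𝓧 → ℝ) : Prop :=
  (∀ d2 ∈ ({0, 1} : Set ℝ), IsCondMeanGiven P X (evD2 D2 d2) S (q d2)) ∧
  (∀ d2 ∈ ({0, 1} : Set ℝ), ∀ᵐ ω ∂P, 0 < q d2 (X ω) ∧ q d2 (X ω) ≤ 1) ∧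
  (∀ d2 ∈ ({0, 1} : Set ℝ), ∀ f : ℝ × ℝ → ℝ, Measurable f → (∃ C, ∀ p, |f p| ≤ C) →
      ∀ h : 𝓧 → ℝ, Measurable h → (∃ C, ∀ x, |h x| ≤ C) →
        ∫ ω, ind (evD2 D2 d2) ω * S ω * f (D1 ω, Y2 ω - Y0 ω) * h (X ω) ∂P
          = ∫ ω, ind (evD2 D2 d2) ω * q d2 (X ω) * f (D1 ω, Y2 ω - Y0 ω) * h (X ω) ∂P)

/-- The path-dependent ATT `τ_{d,(0,0)} = E[Y₂(d) − Y₂(0,0) ∣ D = d]`. -/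
def tau [MeasurableSpace Ω] (P : Measure Ω) (D1 D2 : Ω → ℝ)
    (Y2p : ℝ × ℝ → Ω → ℝ) (d : ℝ × ℝ) : ℝ :=
  (P (evD D1 D2 d)).toReal⁻¹ * ∫ ω in evD D1 D2 d, (Y2p d ω - Y2p (0, 0) ω) ∂P

theorem ind_meas [MeasurableSpace Ω] {A : Set Ω} (hA : MeasurableSet A) : Measurable (ind A) :=
  measurable_const.indicator hA

theorem ind_abs (A : Set Ω) (ω : Ω) : |ind A ω| ≤ 1 := by
  unfold ind; by_cases h : ω ∈ A <;> simp [h]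

theorem exhaust [MeasurableSpace Ω] (P : Measure Ω) (F G : Ω → ℝ) (hF : Integrable F P)
    (hG : Integrable G P) (E : ℕ → Set Ω) (hE : ∀ n, MeasurableSet (E n))
    (hev : ∀ᵐ ω ∂P, ∀ᶠ n in Filter.atTop, ω ∈ E n)
    (h : ∀ n, ∫ ω, F ω * ind (E n) ω ∂P = ∫ ω, G ω * ind (E n) ω ∂P) :
    ∫ ω, F ω ∂P = ∫ ω, G ω ∂P := by
  have key : ∀ F : Ω → ℝ, Integrable F P →
      Filter.Tendsto (fun n => ∫ ω, F ω * ind (E n) ω ∂P) Filter.atTop (nhds (∫ ω, F ω ∂P)) := by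
    intro F hF
    refine tendsto_integral_of_dominated_convergence (fun ω => ‖F ω‖) ?_ hF.norm ?_ ?_
    · intro n
      exact hF.aestronglyMeasurable.mul (ind_meas (hE n)).aestronglyMeasurable
    · intro n
      refine Filter.Eventually.of_forall fun ω => ?_
      rw [norm_mul]
      exact mul_le_of_le_one_right (norm_nonneg _) (ind_abs _ _)
    · filter_upwards [hev] with ω hω
      refine tendsto_const_nhds.congr' ?_
      filter_upwards [hω] with n hn
      simp [ind, hn]
  have h1 := key F hF
  simp_rw [h] at h1
  exact tendsto_nhds_unique h1 (key G hG)

theorem bdd_int [MeasurableSpace Ω] (P : Measure Ω) [IsProbabilityMeasure P] (F : Ω → ℝ)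
    (hF : Measurable F) (C : ℝ) (h : ∀ ω, |F ω| ≤ C) : Integrable F P :=
  Integrable.of_bound hF.aestronglyMeasurable C (Filter.Eventually.of_forall h)

/-- almost sure uniqueness -/
theorem uniq [MeasurableSpace Ω] [MeasurableSpace 𝓧] (P : Measure Ω) [IsProbabilityMeasure P]
    (X : Ω → 𝓧) (hX : Measurable X) (A : Set Ω) (hA : MeasurableSet A) (Z Z' : Ω → ℝ)
    (hZ : ∀ ω ∈ A, Z ω = Z' ω) (g g' : 𝓧 → ℝ)
    (hg : IsCondMeanGiven P X A Z g) (hg' : IsCondMeanGiven P X A Z' g') :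
    ∀ᵐ ω ∂P, ω ∈ A → g (X ω) = g' (X ω) := by
  obtain ⟨mg, hg⟩ := hg
  obtain ⟨mg', hg'⟩ := hg'
  have step : ∀ n : ℕ, ∀ᵐ ω ∂P, ω ∈ A → |g (X ω)| ≤ n → |g' (X ω)| ≤ n →
      g (X ω) = g' (X ω) := by
    intro n
    set B : Set 𝓧 := {x | |g x| ≤ n ∧ |g' x| ≤ n} with hB
    have mB : MeasurableSet B :=
      (measurableSet_le mg.abs measurable_const).inter (measurableSet_le mg'.abs measurable_const)
    have mh : Measurable (fun x => ind B x * (g x - g' x)) := (ind_meas mB).mul (mg.sub mg')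
    have bh : ∀ x, |ind B x * (g x - g' x)| ≤ 2 * n := by
      intro x
      by_cases hx : x ∈ B
      · have h1 := hx.1
        have h2 := hx.2
        simp only [ind, indicator_of_mem hx, one_mul]
        exact (abs_sub _ _).trans (by linarith)
      · simp [ind, hx]
    have e1 := hg _ mh ⟨_, bh⟩
    have e2 := hg' _ mh ⟨_, bh⟩
    have e3 : ∫ ω, ind A ω * Z ω * (ind B (X ω) * (g (X ω) - g' (X ω))) ∂P
        = ∫ ω, ind A ω * Z' ω * (ind B (X ω) * (g (X ω) - g' (X ω))) ∂P := by
      congr 1; ext ω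
      by_cases hω : ω ∈ A
      · rw [hZ ω hω]
      · simp [ind, hω]
    have bnd : ∀ k : 𝓧 → ℝ, Measurable k → (∀ x ∈ B, |k x| ≤ n) →
        Integrable (fun ω => ind A ω * k (X ω) * (ind B (X ω) * (g (X ω) - g' (X ω)))) P := by
      intro k mk hk
      refine bdd_int P _ (((ind_meas hA).mul (mk.comp hX)).mul (mh.comp hX)) (n * (2 * n)) ?_
      intro ω
      by_cases hx : X ω ∈ B
      · rw [abs_mul, abs_mul]
        refine mul_le_mul ?_ (bh _) (abs_nonneg _) (Nat.cast_nonneg _)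
        exact (mul_le_of_le_one_left (abs_nonneg _) (ind_abs _ _)).trans (hk _ hx)
      · have : ind B (X ω) = 0 := by simp [ind, hx]
        rw [this]; simp; positivity
    have i1 := bnd g mg (fun x hx => hx.1)
    have i2 := bnd g' mg' (fun x hx => hx.2)
    have e4 : ∫ ω, (ind A ω * g (X ω) * (ind B (X ω) * (g (X ω) - g' (X ω)))
        - ind A ω * g' (X ω) * (ind B (X ω) * (g (X ω) - g' (X ω)))) ∂P = 0 := by
      rw [integral_sub i1 i2, ← e1, ← e2, e3, sub_self]
    have e5 := (integral_eq_zero_iff_of_nonneg ?_ (i1.sub i2)).1 e4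
    · filter_upwards [e5] with ω hω h1 h2 h3
      have hx : X ω ∈ B := ⟨h2, h3⟩
      simp only [ind, indicator_of_mem hx, indicator_of_mem h1, Pi.zero_apply, Pi.sub_apply, one_mul] at hω
      have : (g (X ω) - g' (X ω)) * (g (X ω) - g' (X ω)) = 0 := by linarith
      exact sub_eq_zero.1 (mul_self_eq_zero.1 this)
    · intro ω
      by_cases h1 : ω ∈ A <;> by_cases h2 : X ω ∈ B <;> simp [ind, h1, h2]
      nlinarith [mul_self_nonneg (g (X ω) - g' (X ω))]
  filter_upwards [ae_all_iff.2 step] with ω hω hA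
  obtain ⟨n, hn⟩ := exists_nat_ge (max |g (X ω)| |g' (X ω)|)
  exact hω n hA ((le_max_left _ _).trans hn) ((le_max_right _ _).trans hn)

/-- overlap: an X-measurable property holding a.s. on A holds a.s. -/
theorem overlap [MeasurableSpace Ω] [MeasurableSpace 𝓧] (P : Measure Ω) [IsProbabilityMeasure P]
    (X : Ω → 𝓧) (hX : Measurable X) (A : Set Ω) (p : 𝓧 → ℝ)
    (hp : IsCondMeanGiven P X Set.univ (ind A) p) (hpos : ∀ᵐ ω ∂P, 0 < p (X ω))
    (N : Set 𝓧) (hN : MeasurableSet N) (h : ∀ᵐ ω ∂P, ω ∈ A → X ω ∉ N) :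
    ∀ᵐ ω ∂P, X ω ∉ N := by
  obtain ⟨mp, hp⟩ := hp
  have step : ∀ n : ℕ, ∀ᵐ ω ∂P, |p (X ω)| ≤ n → X ω ∉ N := by
    intro n
    set B : Set 𝓧 := N ∩ {x | |p x| ≤ n} with hB
    have mB : MeasurableSet B := hN.inter (measurableSet_le mp.abs measurable_const)
    have e := hp (ind B) (ind_meas mB) ⟨1, ind_abs B⟩
    have z : ∫ ω, ind univ ω * ind A ω * ind B (X ω) ∂P = 0 := by
      refine integral_eq_zero_of_ae ?_
      filter_upwards [h] with ω hω
      by_cases h1 : ω ∈ A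
      · simp [ind, hB, hω h1]
      · simp [ind, h1]
    rw [z] at e
    have e := e.symm
    rw [integral_eq_zero_iff_of_nonneg_ae] at e
    · filter_upwards [e, hpos] with ω h1 h2 h3 h4
      have : X ω ∈ B := ⟨h4, h3⟩
      simp [ind, this] at h1
      linarith
    · filter_upwards [hpos] with ω h2
      by_cases h1 : X ω ∈ B <;> simp [ind, h1, h2.le]
    · refine bdd_int P _ (((ind_meas MeasurableSet.univ).mul (mp.comp hX)).mul
        ((ind_meas mB).comp hX)) n ?_
      intro ω
      by_cases h1 : X ω ∈ B
      · simpa [ind, h1] using h1.2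
      · simp [ind, h1]
  filter_upwards [ae_all_iff.2 step] with ω hω
  obtain ⟨n, hn⟩ := exists_nat_ge |p (X ω)|
  exact hω n hn

/-- Corollary 2, part 1: missingness-adjusted outcome regression identifies the PDATT. -/
theorem statement_8
    [MeasurableSpace Ω] [m𝓧 : MeasurableSpace 𝓧]
    (P : Measure Ω) [IsProbabilityMeasure P]
    (X : Ω → 𝓧) (hX : Measurable X)
    (Y0 Y2 D1 D2 S : Ω → ℝ)
    (hY0 : Measurable Y0) (hY2 : Measurable Y2)
    (hD1 : Measurable D1) (hD2 : Measurable D2) (hS : Measurable S)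
    (hY0i : Integrable Y0 P) (hY2i : Integrable Y2 P)
    (hD1v : ∀ ω, D1 ω = 0 ∨ D1 ω = 1) (hD2v : ∀ ω, D2 ω = 0 ∨ D2 ω = 1)
    (hSv : ∀ ω, S ω = 0 ∨ S ω = 1)
    (Y0p Y2p : ℝ × ℝ → Ω → ℝ)
    (hY0p : ∀ e ∈ allPaths, Measurable (Y0p e) ∧ Integrable (Y0p e) P)
    (hY2p : ∀ e ∈ allPaths, Measurable (Y2p e) ∧ Integrable (Y2p e) P)
    (hcons0 : ∀ ω, Y0 ω = Y0p (D1 ω, D2 ω) ω)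
    (hcons2 : ∀ ω, Y2 ω = Y2p (D1 ω, D2 ω) ω)
    (d : ℝ × ℝ) (hd : d ∈ threePaths) (hPd : 0 < P (evD D1 D2 d))
    (hDIDd : DID P X D1 D2 Y0p Y2p d) (hDIDd' : DID P X D1 D2 Y0p Y2p (0, 0))
    (q : ℝ → 𝓧 → ℝ) (hMAR : MAR P X D1 D2 S Y0 Y2 q)
    (pd pd' : 𝓧 → ℝ)
    (hpd : IsCondMeanGiven P X Set.univ (ind (evD D1 D2 d)) pd)
    (hpd' : IsCondMeanGiven P X Set.univ (ind (evD D1 D2 (0, 0))) pd')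
    (hpdpos : ∀ᵐ ω ∂P, 0 < pd (X ω)) (hpd'pos : ∀ᵐ ω ∂P, 0 < pd' (X ω))
    (md' : 𝓧 → ℝ)
    (hmd' : IsCondMeanGiven P X (evD D1 D2 (0, 0)) (fun ω => Y2 ω - Y0 ω) md')
    (hfin1 : Integrable (fun ω => S ω / q d.2 (X ω) * ind (evD D1 D2 d) ω) P)
    (hfin2 : Integrable (fun ω =>
        S ω / q d.2 (X ω) * ind (evD D1 D2 d) ω * (Y2 ω - Y0 ω - md' (X ω))) P) :
    (∫ ω, S ω / q d.2 (X ω) * ind (evD D1 D2 d) ω ∂P)⁻¹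
        * ∫ ω, S ω / q d.2 (X ω) * ind (evD D1 D2 d) ω * (Y2 ω - Y0 ω - md' (X ω)) ∂P
      = tau P D1 D2 Y2p d := by
  obtain ⟨hqc, hq01, hM⟩ := hMAR
  have hd2 : d.2 ∈ ({0, 1} : Set ℝ) := by
    rcases hd with rfl | rfl | rfl <;> simp
  have hdall : d ∈ allPaths := by
    rcases hd with rfl | rfl | rfl <;> simp [allPaths]
  have h0all : ((0, 0) : ℝ × ℝ) ∈ allPaths := by simp [allPaths]
  have mq : Measurable (q d.2) := (hqc d.2 hd2).1
  have hq := hq01 d.2 hd2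
  have hM := hM d.2 hd2
  have mA : ∀ e : ℝ × ℝ, MeasurableSet (evD D1 D2 e) := fun e =>
    (hD1 (measurableSet_singleton e.1)).inter (hD2 (measurableSet_singleton e.2))
  have mA2 : MeasurableSet (evD2 D2 d.2) := hD2 (measurableSet_singleton d.2)
  obtain ⟨hna, tr, htrU, htr⟩ := hDIDd
  obtain ⟨-, tr', htrU', htr'⟩ := hDIDd'
  -- md' = tr a.s.
  have u1 := uniq P X hX _ MeasurableSet.univ _ _ (fun _ _ => rfl) tr tr' htrU htrU'
  have u2 := uniq P X hX _ (mA (0, 0)) _ _ (fun ω hω => by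
    have h1 : D1 ω = 0 := hω.1
    have h2 : D2 ω = 0 := hω.2
    simp only [hcons0, hcons2, h1, h2]) md' tr' hmd' htr'
  have mmd := hmd'.1
  have mtr := htr.1
  have u3 := overlap P X hX _ pd' hpd' hpd'pos {x | md' x ≠ tr' x}
    (measurableSet_eq_fun mmd htr'.1).compl (by
      filter_upwards [u2] with ω h1 h2
      simpa using h1 h2)
  have hmt : ∀ᵐ ω ∂P, md' (X ω) = tr (X ω) := by
    filter_upwards [u1, u3] with ω h1 h2
    rw [h1 trivial]; simpa using h2
  set A := evD D1 D2 d with hAdef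
  have iΔ : Integrable (fun ω => Y2 ω - Y0 ω) P := hY2i.sub hY0i
  have mΔ : Measurable (fun ω => Y2 ω - Y0 ω) := hY2.sub hY0
  have indA : ∀ ω, ind A ω = ind (evD2 D2 d.2) ω * ind ({d.1} : Set ℝ) (D1 ω) := by
    intro ω
    by_cases h1 : D1 ω = d.1 <;> by_cases h2 : D2 ω = d.2 <;>
      simp [ind, hAdef, evD, evD2, h1, h2, Set.indicator]
  have indA0 : ∀ ω, ind A ω * ind (evD2 D2 d.2) ω = ind A ω := by
    intro ω
    by_cases h1 : D1 ω = d.1 <;> by_cases h2 : D2 ω = d.2 <;>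
      simp [ind, hAdef, evD, evD2, h1, h2, Set.indicator]
  have mIA : Measurable (ind A) := ind_meas (mA d)
  have bS : ∀ ω, |S ω| ≤ 1 := fun ω => by rcases hSv ω with h | h <;> simp [h]
  -- MAR, no outcome
  have M0 : ∀ h : 𝓧 → ℝ, Measurable h → (∃ C, ∀ x, |h x| ≤ C) →
      ∫ ω, ind A ω * S ω * h (X ω) ∂P = ∫ ω, ind A ω * q d.2 (X ω) * h (X ω) ∂P := by
    intro h mh bh
    have := hM (fun p => ind ({d.1} : Set ℝ) p.1)
      ((ind_meas (measurableSet_singleton _)).comp measurable_fst) ⟨1, fun p => ind_abs _ _⟩ h mh bh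
    convert this using 3 with ω ω
    · rw [indA]; ring
    · rw [indA]; ring
  -- MAR, outcome
  have M1 : ∀ h : 𝓧 → ℝ, Measurable h → (∃ C, ∀ x, |h x| ≤ C) →
      ∫ ω, ind A ω * S ω * h (X ω) * (Y2 ω - Y0 ω) ∂P
        = ∫ ω, ind A ω * q d.2 (X ω) * h (X ω) * (Y2 ω - Y0 ω) ∂P := by
    intro h mh bh
    obtain ⟨C, hC⟩ := bh
    refine exhaust P _ _ ?_ ?_ (fun n : ℕ => {ω | |Y2 ω - Y0 ω| ≤ n}) ?_ ?_ ?_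
    · refine iΔ.bdd_mul (c := 1 * 1 * C)
        ((mIA.mul hS).mul (mh.comp hX)).aestronglyMeasurable ?_
      refine Filter.Eventually.of_forall fun ω => ?_
      rw [norm_mul, norm_mul]
      exact mul_le_mul (mul_le_mul (ind_abs _ _) (bS ω) (norm_nonneg _) zero_le_one) (hC _)
        (norm_nonneg _) (by norm_num)
    · refine iΔ.bdd_mul (c := 1 * 1 * C)
        ((mIA.mul (mq.comp hX)).mul (mh.comp hX)).aestronglyMeasurable ?_
      filter_upwards [hq] with ω hω
      rw [norm_mul, norm_mul]
      have : ‖q d.2 (X ω)‖ ≤ 1 := by rw [Real.norm_eq_abs, abs_of_pos hω.1]; exact hω.2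
      exact mul_le_mul (mul_le_mul (ind_abs _ _) this (norm_nonneg _) zero_le_one) (hC _)
        (norm_nonneg _) (by norm_num)
    · exact fun n => measurableSet_le mΔ.abs measurable_const
    · refine Filter.Eventually.of_forall fun ω => ?_
      obtain ⟨n, hn⟩ := exists_nat_ge |Y2 ω - Y0 ω|
      filter_upwards [Filter.eventually_ge_atTop n] with k hk
      exact hn.trans (by exact_mod_cast hk)
    · intro n
      have := hM (fun p => ind ({d.1} : Set ℝ) p.1 * (p.2 * ind {y : ℝ | |y| ≤ n} p.2))
        (((ind_meas (measurableSet_singleton _)).comp measurable_fst).mul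
          (measurable_snd.mul ((ind_meas
            (measurableSet_le measurable_id.abs measurable_const)).comp measurable_snd)))
        ⟨1 * n, fun p => by
          rw [abs_mul]
          refine mul_le_mul (ind_abs _ _) ?_ (abs_nonneg _) zero_le_one
          by_cases hp : |p.2| ≤ n <;> simp [ind, hp]⟩ h mh ⟨C, hC⟩
      convert this using 3 with ω ω
      · rw [indA]; simp only [ind, Set.indicator, mem_ofPred_eq]; ring
      · rw [indA]; simp only [ind, Set.indicator, mem_ofPred_eq]; ring
  -- truncation sets
  let B : ℕ → Set 𝓧 := fun n => {x | |md' x| ≤ n ∧ |tr x| ≤ n ∧ 1 ≤ n * q d.2 x}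
  have mB : ∀ n, MeasurableSet (B n) := fun n =>
    (measurableSet_le mmd.abs measurable_const).inter
      ((measurableSet_le mtr.abs measurable_const).inter
        (measurableSet_le measurable_const (mq.const_mul _)))
  have evB : ∀ᵐ ω ∂P, ∀ᶠ n in Filter.atTop, ω ∈ X ⁻¹' B n := by
    filter_upwards [hq] with ω hω
    obtain ⟨n, hn⟩ := exists_nat_ge (max (max |md' (X ω)| |tr (X ω)|) (1 / q d.2 (X ω)))
    filter_upwards [Filter.eventually_ge_atTop n] with k hk
    have hn : max (max |md' (X ω)| |tr (X ω)|) (1 / q d.2 (X ω)) ≤ k :=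
      hn.trans (by exact_mod_cast hk)
    have h1 := max_le_iff.1 hn
    have h2 := max_le_iff.1 h1.1
    exact ⟨h2.1, h2.2, (div_le_iff₀ hω.1).1 h1.2⟩
  have Bq : ∀ n, ∀ x ∈ B n, 0 < q d.2 x := by
    intro n x hx
    by_contra hc
    have := mul_nonpos_of_nonneg_of_nonpos (Nat.cast_nonneg (α := ℝ) n) (not_lt.1 hc)
    linarith [hx.2.2]
  let w : ℕ → 𝓧 → ℝ := fun n x => ind (B n) x / q d.2 x
  have mw : ∀ n, Measurable (w n) := fun n => (ind_meas (mB n)).div mq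
  have bw : ∀ n x, |w n x| ≤ n := by
    intro n x
    by_cases hx : x ∈ B n
    · have := Bq n x hx
      simp only [w, ind, indicator_of_mem hx]
      rw [abs_of_pos (by positivity), div_le_iff₀ this]
      exact hx.2.2
    · simp [w, ind, hx]
  have wq : ∀ n x, q d.2 x * w n x = ind (B n) x := by
    intro n x
    by_cases hx : x ∈ B n
    · have := (Bq n x hx).ne'
      simp only [w]; field_simp
    · simp [w, ind, hx]
  have iB : ∀ n ω, ind (X ⁻¹' B n) ω = ind (B n) (X ω) := fun n ω => rfl
  -- denominator
  have hden : ∫ ω, S ω / q d.2 (X ω) * ind A ω ∂P = (P A).toReal := by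
    have : ∫ ω, S ω / q d.2 (X ω) * ind A ω ∂P = ∫ ω, ind A ω ∂P := by
      refine exhaust P _ _ hfin1 (bdd_int P _ mIA 1 (ind_abs A)) (fun n => X ⁻¹' B n)
        (fun n => hX (mB n)) evB ?_
      intro n
      have := M0 (w n) (mw n) ⟨_, bw n⟩
      convert this using 3 with ω ω
      · rw [iB]; simp only [w]; ring
      · rw [mul_assoc, wq, iB]
    rw [this]
    simp only [ind]
    rw [integral_indicator_const _ (mA d)]; simp [Measure.real, hAdef]
  -- numerator
  have iA : ∀ F : Ω → ℝ, Integrable F P → Integrable (fun ω => ind A ω * F ω) P := fun F hF =>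
    hF.bdd_mul (c := 1) mIA.aestronglyMeasurable (Filter.Eventually.of_forall (ind_abs A))
  have iAB : ∀ (n : ℕ) (F : Ω → ℝ), Integrable F P →
      Integrable (fun ω => ind A ω * F ω * ind (B n) (X ω)) P := fun n F hF =>
    (iA F hF).mul_bdd (c := 1) ((ind_meas (mB n)).comp hX).aestronglyMeasurable
      (Filter.Eventually.of_forall fun ω => ind_abs (B n) _)
  have hnum : ∫ ω, S ω / q d.2 (X ω) * ind A ω * (Y2 ω - Y0 ω - md' (X ω)) ∂P
      = ∫ ω, ind A ω * (Y2p d ω - Y2p (0, 0) ω) ∂P := by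
    refine exhaust P _ _ hfin2 (iA _ ((hY2p d hdall).2.sub (hY2p _ h0all).2))
      (fun n => X ⁻¹' B n) (fun n => hX (mB n)) evB ?_
    intro n
    have bmw : ∀ x, |md' x * w n x| ≤ n * n := by
      intro x
      by_cases hx : x ∈ B n
      · rw [abs_mul]
        exact mul_le_mul hx.1 (bw n x) (abs_nonneg _) (Nat.cast_nonneg _)
      · simp only [w, ind, indicator_of_notMem hx]; simp; positivity
    have btr : ∀ x, |tr x * ind (B n) x| ≤ n := by
      intro x
      by_cases hx : x ∈ B n
      · simpa [ind, hx] using hx.2.1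
      · simp [ind, hx]
    have e1 := M1 (w n) (mw n) ⟨_, bw n⟩
    have e2 := M0 (fun x => md' x * w n x) (mmd.mul (mw n)) ⟨_, bmw⟩
    have e3 := hna (ind (B n)) (ind_meas (mB n)) ⟨1, ind_abs _⟩
    have e4 := htr.2 (ind (B n)) (ind_meas (mB n)) ⟨1, ind_abs _⟩
    have j1 : Integrable (fun ω => ind A ω * S ω * w n (X ω) * (Y2 ω - Y0 ω)) P := by
      refine iΔ.bdd_mul (c := 1 * 1 * n)
        ((mIA.mul hS).mul ((mw n).comp hX)).aestronglyMeasurable ?_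
      refine Filter.Eventually.of_forall fun ω => ?_
      rw [norm_mul, norm_mul]
      exact mul_le_mul (mul_le_mul (ind_abs _ _) (bS ω) (norm_nonneg _) zero_le_one) (bw n _)
        (norm_nonneg _) (by norm_num)
    have j2 : Integrable (fun ω => ind A ω * S ω * (md' (X ω) * w n (X ω))) P := by
      refine bdd_int P _ ((mIA.mul hS).mul ((mmd.mul (mw n)).comp hX)) (1 * 1 * (n * n)) ?_
      intro ω
      rw [abs_mul, abs_mul]
      exact mul_le_mul (mul_le_mul (ind_abs _ _) (bS ω) (abs_nonneg _) zero_le_one) (bmw _)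
        (abs_nonneg _) (by norm_num)
    have k2 := iAB n _ (hY2p d hdall).2
    have k20 := iAB n _ (hY2p _ h0all).2
    have k0 := iAB n _ (hY0p d hdall).2
    have k00 := iAB n _ (hY0p _ h0all).2
    have f1 : ∫ ω, ind A ω * q d.2 (X ω) * w n (X ω) * (Y2 ω - Y0 ω) ∂P
        = ∫ ω, ind A ω * Y2p d ω * ind (B n) (X ω) ∂P
          - ∫ ω, ind A ω * Y0p d ω * ind (B n) (X ω) ∂P := by
      rw [← integral_sub k2 k0]
      congr 1; ext ω
      rw [mul_assoc (ind A ω), wq]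
      by_cases hω : ω ∈ A
      · have h1 : D1 ω = d.1 := hω.1
        have h2 : D2 ω = d.2 := hω.2
        rw [hcons0, hcons2, h1, h2]; ring
      · have : ind A ω = 0 := by simp [ind, hω]
        rw [this]; ring
    have f2 : ∫ ω, ind A ω * q d.2 (X ω) * (md' (X ω) * w n (X ω)) ∂P
        = ∫ ω, ind A ω * Y2p (0, 0) ω * ind (B n) (X ω) ∂P
          - ∫ ω, ind A ω * Y0p (0, 0) ω * ind (B n) (X ω) ∂P := by
      rw [← integral_sub k20 k00]
      have : ∫ ω, ind A ω * q d.2 (X ω) * (md' (X ω) * w n (X ω)) ∂P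
          = ∫ ω, ind A ω * tr (X ω) * ind (B n) (X ω) ∂P := by
        refine integral_congr_ae ?_
        filter_upwards [hmt] with ω hω
        rw [← wq, hω]; ring
      rw [this, ← e4]
      congr 1; ext ω; ring
    calc _ = ∫ ω, (ind A ω * S ω * w n (X ω) * (Y2 ω - Y0 ω)
            - ind A ω * S ω * (md' (X ω) * w n (X ω))) ∂P := by
          congr 1; ext ω; rw [iB]; simp only [w]; ring
      _ = ∫ ω, ind A ω * Y2p d ω * ind (B n) (X ω) ∂P
          - ∫ ω, ind A ω * Y2p (0, 0) ω * ind (B n) (X ω) ∂P := by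
          rw [integral_sub j1 j2, e1, e2, f1, f2, e3]; ring
      _ = _ := by
          rw [← integral_sub k2 k20]
          congr 1; ext ω; rw [iB]; ring
  rw [hden, hnum, tau, ← integral_indicator (mA d)]
  congr 2; ext ω
  by_cases hω : ω ∈ A <;> simp [ind, hω, hAdef ▸ hω]


end DIDMissing
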